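/- The angular factor a of Aronsson's function is real-analytic at every θ ∈ ℝ ∖ πℤ; in particular a is real-analytic at θ = π/2 even though the formula involves |tan(θ/2)|^{4/3}. -/

import Mathlib

noncomputable section

/-- The real cube root. -/
def cbrt (x : ℝ) : ℝ :=
  if x < 0 then -((-x) ^ ((1 : ℝ) / 3)) else x ^ ((1 : ℝ) / 3)

open Classical in
/-- The angular factor `a(θ)` of Aronsson's function, with `a(θ) = -1` at odd multiples
of `π`. -/
def aronssonAngle (θ : ℝ) : ℝ :=
  if ∃ k : ℤ, θ = (2 * (k : ℝ) + 1) * Real.pi then -1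
  else
    cbrt (Real.cos θ * (1 - |Real.tan (θ / 2)| ^ ((4 : ℝ) / 3)) ^ 2 /
      (1 + |Real.tan (θ / 2)| ^ ((4 : ℝ) / 3) + |Real.tan (θ / 2)| ^ ((8 : ℝ) / 3)))

/-!
The substitution `s = |tan (θ / 2)| ^ (2 / 3)` turns the powers `4 / 3` and `8 / 3` into `s ^ 2` and
`s ^ 4`, and `cos θ` into `(1 - s ^ 3) / (1 + s ^ 3)`. The radicand then factors as
`(1 - s) ^ 3 * ((1 + s) / (1 - s + s ^ 2) ^ 2)`: its zero at `s = 1`, that is at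
`θ = ±π / 2` modulo `2π`, has order exactly three, so the cube root extracts `1 - s` and is
otherwise taken of a positive number.
Away from `πℤ` we have `tan (θ / 2) ≠ 0`, hence `s` itself depends analytically on `θ`.
-/

lemma cbrt_of_nonneg {x : ℝ} (hx : 0 ≤ x) : cbrt x = x ^ ((1 : ℝ) / 3) :=
  if_neg hx.not_gt

lemma cbrt_neg (x : ℝ) : cbrt (-x) = -cbrt x := by
  rcases lt_trichotomy x 0 with hx | rfl | hx
  · simp [cbrt, hx, hx.le]
  · simp [cbrt]
  · simp [cbrt, hx, hx.le]

lemma cbrt_nonneg {x : ℝ} (hx : 0 ≤ x) : 0 ≤ cbrt x := by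
  rw [cbrt_of_nonneg hx]
  positivity

lemma pow_three_cbrt (x : ℝ) : cbrt x ^ 3 = x := by
  have cube_of_nonneg {y : ℝ} (hy : 0 ≤ y) : cbrt y ^ 3 = y := by
    rw [cbrt_of_nonneg hy, one_div]
    exact Real.rpow_inv_natCast_pow hy three_ne_zero
  rcases le_total 0 x with hx | hx
  · exact cube_of_nonneg hx
  · have := cube_of_nonneg (neg_nonneg.mpr hx)
    rwa [cbrt_neg, Odd.neg_pow (by decide), neg_inj] at this

lemma cbrt_eq_iff {x y : ℝ} : cbrt x = y ↔ x = y ^ 3 := by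
  rw [← (Odd.strictMono_pow (by decide : Odd 3)).injective.eq_iff, pow_three_cbrt]

lemma cbrt_pow_three_mul (x y : ℝ) : cbrt (x ^ 3 * y) = x * cbrt y := by
  rw [cbrt_eq_iff, mul_pow, pow_three_cbrt]

lemma cbrt_sq_pow (t : ℝ) (n : ℕ) : cbrt (t ^ 2) ^ n = |t| ^ (2 * (n : ℝ) / 3) := by
  rw [cbrt_of_nonneg (sq_nonneg t), ← sq_abs, ← Real.rpow_natCast_mul (abs_nonneg t),
    ← Real.rpow_mul_natCast (abs_nonneg t)]
  congr 1
  push_cast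
  ring

lemma analyticAt_cbrt {x : ℝ} (hx : x ≠ 0) : AnalyticAt ℝ cbrt x := by
  have analyticAt_of_pos {y : ℝ} (hy : 0 < y) : AnalyticAt ℝ cbrt y := by
    have hrpow : AnalyticAt ℝ (fun z : ℝ => z ^ ((1 : ℝ) / 3)) y :=
      (Real.contDiffAt_rpow_const_of_ne hy.ne').analyticAt
    refine hrpow.congr ?_
    filter_upwards [lt_mem_nhds hy] with z hz
    exact (cbrt_of_nonneg hz.le).symm
  rcases hx.lt_or_gt with hneg | hpos
  · have hodd : cbrt = fun y => -cbrt (-y) := by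
      funext y
      rw [cbrt_neg, neg_neg]
    rw [hodd]
    exact ((analyticAt_of_pos (neg_pos.mpr hneg)).fun_comp analyticAt_id.fun_neg).fun_neg
  · exact analyticAt_of_pos hpos

/-- The angular factor of Aronsson's function as a function of `s = |tan (θ / 2)| ^ (2 / 3)`, with
the factor `1 - s` already extracted from the cube root. -/
def aronssonProfile (s : ℝ) : ℝ :=
  (1 - s) * cbrt ((1 + s) / (1 - s + s ^ 2) ^ 2)

lemma one_sub_add_sq_pos (s : ℝ) : 0 < 1 - s + s ^ 2 := by
  nlinarith [sq_nonneg (s - 1 / 2)]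

lemma cbrt_eq_aronssonProfile {s : ℝ} (hs : 1 + s ≠ 0) :
    cbrt ((1 - s ^ 3) / (1 + s ^ 3) * (1 - s ^ 2) ^ 2 / (1 + s ^ 2 + s ^ 4)) =
      aronssonProfile s := by
  have hsub : 1 - s + s ^ 2 ≠ 0 := (one_sub_add_sq_pos s).ne'
  have hadd : 1 + s + s ^ 2 ≠ 0 := by simpa using (one_sub_add_sq_pos (-s)).ne'
  have hcube : 1 + s ^ 3 = (1 + s) * (1 - s + s ^ 2) := by ring
  have hquartic : 1 + s ^ 2 + s ^ 4 = (1 - s + s ^ 2) * (1 + s + s ^ 2) := by ring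
  have hradicand : (1 - s ^ 3) / (1 + s ^ 3) * (1 - s ^ 2) ^ 2 / (1 + s ^ 2 + s ^ 4) =
      (1 - s) ^ 3 * ((1 + s) / (1 - s + s ^ 2) ^ 2) := by
    rw [hcube, hquartic]
    field_simp
    ring
  rw [hradicand, cbrt_pow_three_mul, aronssonProfile]

lemma analyticAt_aronssonProfile {s : ℝ} (hs : 1 + s ≠ 0) : AnalyticAt ℝ aronssonProfile s := by
  have hq : (1 - s + s ^ 2) ^ 2 ≠ 0 := pow_ne_zero 2 (one_sub_add_sq_pos s).ne'
  have hradicand : AnalyticAt ℝ (fun x : ℝ => (1 + x) / (1 - x + x ^ 2) ^ 2) s := by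
    fun_prop (disch := assumption)
  have hroot := (analyticAt_cbrt (div_ne_zero hs hq)).fun_comp_of_eq hradicand rfl
  exact (analyticAt_const.sub analyticAt_id).mul hroot

lemma one_add_cbrt_sq_ne_zero (t : ℝ) : 1 + cbrt (t ^ 2) ≠ 0 :=
  (add_pos_of_pos_of_nonneg one_pos (cbrt_nonneg (sq_nonneg t))).ne'

lemma aronssonAngle_eq_aronssonProfile {θ : ℝ} (hθ : Real.cos θ ≠ -1) :
    aronssonAngle θ = aronssonProfile (cbrt (Real.tan (θ / 2) ^ 2)) := by
  have hodd : ¬∃ k : ℤ, θ = (2 * (k : ℝ) + 1) * Real.pi := by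
    rintro ⟨k, hk⟩
    exact hθ (Real.cos_eq_neg_one_iff.mpr ⟨k, by rw [hk]; ring⟩)
  rw [aronssonAngle, if_neg hodd]
  set t := Real.tan (θ / 2)
  have hcos : Real.cos θ = (1 - cbrt (t ^ 2) ^ 3) / (1 + cbrt (t ^ 2) ^ 3) := by
    rw [pow_three_cbrt]
    exact Real.cos_eq_two_mul_tan_half_div_one_sub_tan_half_sq θ hθ
  have hpow_four : |t| ^ ((4 : ℝ) / 3) = cbrt (t ^ 2) ^ 2 := by
    rw [cbrt_sq_pow]
    norm_num
  have hpow_eight : |t| ^ ((8 : ℝ) / 3) = cbrt (t ^ 2) ^ 4 := by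
    rw [cbrt_sq_pow]
    norm_num
  rw [hcos, hpow_four, hpow_eight, cbrt_eq_aronssonProfile (one_add_cbrt_sq_ne_zero t)]

lemma tan_half_ne_zero {θ : ℝ} (hθ : Real.sin θ ≠ 0) : Real.tan (θ / 2) ≠ 0 := by
  intro h
  apply hθ
  rw [Real.sin_eq_two_mul_tan_half_div_one_add_tan_half_sq, h, mul_zero, zero_div]

lemma analyticAt_tan {x : ℝ} (hx : Real.cos x ≠ 0) : AnalyticAt ℝ Real.tan x :=
  (Real.contDiffAt_tan.mpr hx).analyticAt

/-- The angular factor of Aronsson's function is real-analytic at every `θ ∉ πℤ`. -/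
theorem stmt14 :
    ∀ θ : ℝ, (∀ k : ℤ, θ ≠ (k : ℝ) * Real.pi) → AnalyticAt ℝ aronssonAngle θ := by
  intro θ hθ
  have hsin : Real.sin θ ≠ 0 := Real.sin_ne_zero_iff.mpr fun k => (hθ k).symm
  have htan : Real.tan (θ / 2) ≠ 0 := tan_half_ne_zero hsin
  have hcos : ∀ᶠ x in nhds θ, Real.cos x ≠ -1 :=
    Real.continuous_cos.continuousAt.eventually_ne fun h =>
      hsin (Real.sin_eq_zero_iff_cos_eq.mpr (Or.inr h))
  have htan_half : AnalyticAt ℝ (fun x => Real.tan (x / 2)) θ :=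
    (analyticAt_tan (mt Real.tan_eq_zero_of_cos_eq_zero htan)).fun_comp_of_eq
      analyticAt_id.div_const rfl
  have hs : AnalyticAt ℝ (fun x => cbrt (Real.tan (x / 2) ^ 2)) θ :=
    (analyticAt_cbrt (pow_ne_zero 2 htan)).fun_comp_of_eq (htan_half.fun_pow 2) rfl
  have hprofile : AnalyticAt ℝ (fun x => aronssonProfile (cbrt (Real.tan (x / 2) ^ 2))) θ :=
    (analyticAt_aronssonProfile (one_add_cbrt_sq_ne_zero _)).fun_comp_of_eq hs rfl
  exact hprofile.congr (hcos.mono fun x hx => (aronssonAngle_eq_aronssonProfile hx).symm)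

end
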